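/- If α ∈ Λ has E-degree p and β ∈ Λ has E-degree q with p + q = n + 2, then ι_ξ²(α) * β + 2 · ι_ξ(α) * ι_ξ(β) + α * ι_ξ²(β) = 0. (This is the paper's identity 0 = ι_ξ²(α∧β) = 2ι_ξα∧ι_ξβ + ι_ξ²α∧β + α∧ι_ξ²β for (top+2)-forms contracted twice with the odd vector field ξ.) -/

import Mathlib

noncomputable section

open ExteriorAlgebra

variable (E G : Type) [AddCommGroup E] [Module ℝ E] [AddCommGroup G] [Module ℝ G]

/-- The ghost generator `θ = ι(0, g)`. -/
def ghost (g : G) : ExteriorAlgebra ℝ (E × G) := ExteriorAlgebra.ι ℝ ((0 : E), g)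

/-- The extension `f̃(e, g) = f(e)` of a covector on `E` to `E × G`. -/
def fTilde (f : Module.Dual ℝ E) : Module.Dual ℝ (E × G) := f.comp (LinearMap.fst ℝ E G)

/-- The odd contraction `ι_ξ x = Σ_i θ_i * ∂_i x`. -/
def iotaXi {k : ℕ} (g : Fin k → G) (f : Fin k → Module.Dual ℝ E) :
    ExteriorAlgebra ℝ (E × G) →ₗ[ℝ] ExteriorAlgebra ℝ (E × G) :=
  ∑ i, (LinearMap.mulLeft ℝ (ghost E G (g i))).comp
    (CliffordAlgebra.contractLeft (fTilde E G (f i)))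

/-- The algebra map `Λ(E) → Λ(E × G)` induced by `e ↦ (e, 0)`. -/
def inclE : ExteriorAlgebra ℝ E →ₐ[ℝ] ExteriorAlgebra ℝ (E × G) :=
  ExteriorAlgebra.lift ℝ ⟨(ExteriorAlgebra.ι ℝ).comp (LinearMap.inl ℝ E G),
    fun _ => ExteriorAlgebra.ι_sq_zero _⟩

/-- `x ∈ Λ(E × G)` has `E`-degree `p` if it is the image of an element of the `p`-th
exterior power of `E` under the algebra map induced by `e ↦ (e, 0)`. -/
def HasEDegree (p : ℕ) (x : ExteriorAlgebra ℝ (E × G)) : Prop :=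
  x ∈ Submodule.map (inclE E G).toLinearMap (⋀[ℝ]^p E)

lemma iotaXi_apply' {k : ℕ} (g : Fin k → G) (f : Fin k → Module.Dual ℝ E)
    (x : ExteriorAlgebra ℝ (E × G)) :
    iotaXi E G g f x =
      ∑ i, ghost E G (g i) * CliffordAlgebra.contractLeft (fTilde E G (f i)) x := by
  simp [iotaXi, LinearMap.sum_apply]

lemma iotaXi_ι_mul {k : ℕ} (g : Fin k → G) (f : Fin k → Module.Dual ℝ E)
    (a : E × G) (b : ExteriorAlgebra ℝ (E × G)) :
    iotaXi E G g f (ExteriorAlgebra.ι ℝ a * b) =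
      iotaXi E G g f (ExteriorAlgebra.ι ℝ a) * b
        + ExteriorAlgebra.ι ℝ a * iotaXi E G g f b := by
  simp only [iotaXi_apply', Finset.sum_mul, Finset.mul_sum, ← Finset.sum_add_distrib]
  refine Finset.sum_congr rfl fun i _ => ?_
  have h1 := CliffordAlgebra.contractLeft_ι_mul (Q := (0 : QuadraticForm ℝ (E × G)))
    (fTilde E G (f i)) a b
  have h2 := CliffordAlgebra.contractLeft_ι (Q := (0 : QuadraticForm ℝ (E × G)))
    (fTilde E G (f i)) a
  have h3 : ghost E G (g i) * ExteriorAlgebra.ι ℝ a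
      = - (ExteriorAlgebra.ι ℝ a * ghost E G (g i)) :=
    eq_neg_of_add_eq_zero_left (ExteriorAlgebra.ι_add_mul_swap _ _)
  erw [h1, h2]
  change ghost E G (g i) * (_ - ExteriorAlgebra.ι ℝ a * _) = _
  rw [mul_sub, ← mul_assoc, h3, Algebra.smul_def, neg_mul, sub_neg_eq_add, mul_assoc, mul_assoc]

lemma iotaXi_mul {k : ℕ} (g : Fin k → G) (f : Fin k → Module.Dual ℝ E)
    (x y : ExteriorAlgebra ℝ (E × G)) :
    iotaXi E G g f (x * y) = iotaXi E G g f x * y + x * iotaXi E G g f y := by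
  induction x using CliffordAlgebra.left_induction with
  | algebraMap r =>
    have h : iotaXi E G g f (algebraMap ℝ (ExteriorAlgebra ℝ (E × G)) r) = 0 := by
      rw [iotaXi_apply']
      refine Finset.sum_eq_zero fun i _ => ?_
      erw [CliffordAlgebra.contractLeft_algebraMap, mul_zero]
    erw [h]
    rw [zero_mul, zero_add, ← Algebra.smul_def, map_smul, Algebra.smul_def]
  | add x x' hx hx' =>
    rw [add_mul, map_add, hx, hx', map_add, add_mul, add_mul]; abel
  | ι_mul x m hx =>
    change iotaXi E G g f (ExteriorAlgebra.ι ℝ m * x * y) =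
      iotaXi E G g f (ExteriorAlgebra.ι ℝ m * x) * y
        + ExteriorAlgebra.ι ℝ m * x * iotaXi E G g f y
    rw [mul_assoc, iotaXi_ι_mul, hx, iotaXi_ι_mul]
    simp only [mul_add, add_mul, mul_assoc, add_assoc]

lemma extPower_eq_bot [FiniteDimensional ℝ E] {m : ℕ} (hm : Module.finrank ℝ E < m) :
    (⋀[ℝ]^m E) = ⊥ := by
  rw [← ExteriorAlgebra.ιMulti_span_fixedDegree, Submodule.span_eq_bot]
  rintro _ ⟨v, rfl⟩
  apply AlternatingMap.map_linearDependent
  intro h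
  have := h.fintype_card_le_finrank
  simp at this
  omega

/-- If `α` has `E`-degree `p` and `β` has `E`-degree `q` with
`p + q = n + 2`, then `ι_ξ²(α) * β + 2·ι_ξ(α) * ι_ξ(β) + α * ι_ξ²(β) = 0`. -/
theorem iotaXi_sq_top_plus_two [FiniteDimensional ℝ E] [FiniteDimensional ℝ G]
    {k : ℕ} (g : Fin k → G) (f : Fin k → Module.Dual ℝ E)
    (p q : ℕ) (α β : ExteriorAlgebra ℝ (E × G))
    (hα : HasEDegree E G p α) (hβ : HasEDegree E G q β)
    (hpq : p + q = Module.finrank ℝ E + 2) :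
    (iotaXi E G g f ^ 2) α * β + 2 • (iotaXi E G g f α * iotaXi E G g f β) +
      α * (iotaXi E G g f ^ 2) β = 0 := by
  have h0 : α * β = 0 := by
    obtain ⟨a, ha, rfl⟩ := hα
    obtain ⟨b, hb, rfl⟩ := hβ
    have hab : a * b ∈ (⋀[ℝ]^(p + q) E) := by
      have := Submodule.mul_mem_mul ha hb
      rwa [← pow_add] at this
    rw [extPower_eq_bot E (by omega), Submodule.mem_bot] at hab
    change inclE E G a * inclE E G b = 0
    rw [← map_mul, hab, map_zero]
  have h := congrArg (fun z => iotaXi E G g f (iotaXi E G g f z)) h0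
  simp only [iotaXi_mul, map_add, map_zero] at h
  simp only [pow_two, Module.End.mul_apply, two_nsmul]
  rw [← h]
  abel
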